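/- Let T be a compactly generated triangulated category with a generating sequence G, an orthogonal metric R, and an integer A > 0 such that for every i ∈ ℤ and every F ∈ R_i there is a distinguished triangle E → F → D → ΣE with D ∈ R_{i+1} and E ∈ Ḡ^{[-A-i,A-i]}. Then: (1) for integers i < j and any F ∈ R_i there is a triangle E → F → D → ΣE with E ∈ Ḡ^{[-A-j+1,A-i]} and D ∈ R_j; and (2) for any F ∈ R_i there is a sequence E_1 → E_2 → E_3 → ⋯ with compatible maps to F such that for each n ≥ 1 there is a triangle E_n → F → D_n → ΣE_n with E_n ∈ Ḡ^{[-A-n-i+1,A-i]} and D_n ∈ R_{i+n}. If moreover in the hypothesis one may always take E ∈ Ḡ^{[-A-i,A-i]}_A, then in (1) one may take E ∈ Ḡ^{[-A-j+1,A-i]}_{(j-i)A} and in (2) one may take E_n ∈ Ḡ^{[-A-n-i+1,A-i]}_{nA}. -/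

import Mathlib

namespace GApprox

open CategoryTheory CategoryTheory.Limits CategoryTheory.Pretriangulated

universe w v u

variable (C : Type u) [Category.{v} C] [HasZeroObject C] [HasShift C ℤ]
  [Preadditive C] [∀ n : ℤ, (shiftFunctor C n).Additive] [Pretriangulated C]
  [HasCoproducts.{v} C]

/-- The right orthogonal of a class of objects. -/
def rOrth (A : Set C) : Set C := {X | ∀ a ∈ A, ∀ f : a ⟶ X, f = 0}

/-- The left orthogonal of a class of objects. -/
def lOrth (A : Set C) : Set C := {X | ∀ a ∈ A, ∀ f : X ⟶ a, f = 0}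

/-- `Hom(A, B) = 0`. -/
def homZero (A B : Set C) : Prop := ∀ a ∈ A, ∀ b ∈ B, ∀ f : a ⟶ b, f = 0

/-- The star operation `A ⋆ B`: objects `Y` admitting a distinguished triangle
`X ⟶ Y ⟶ Z ⟶ ΣX` with `X ∈ A` and `Z ∈ B`. -/
def starSet (A B : Set C) : Set C :=
  {Y | ∃ (X Z : C) (f : X ⟶ Y) (g : Y ⟶ Z) (h : Z ⟶ X⟦(1 : ℤ)⟧),
    Triangle.mk f g h ∈ (distTriang C) ∧ X ∈ A ∧ Z ∈ B}

/-- The (strictly full) shift `Σⁿ A` of a class of objects. -/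
def shiftSet (n : ℤ) (A : Set C) : Set C :=
  {X | ∃ a ∈ A, Nonempty (X ≅ (shiftFunctor C n).obj a)}

/-- An object is compact if any map to a coproduct factors through a finite subcoproduct. -/
def IsCompactObj (X : C) : Prop :=
  ∀ (α : Type v) (f : α → C) (g : X ⟶ ∐ f),
    ∃ (s : Finset α) (h : X ⟶ ∐ (fun i : {a : α // a ∈ s} => f i.1)),
      g = h ≫ Sigma.desc (fun i => Sigma.ι f i.1)

/-- The class of compact objects `T^c`. -/
def compacts : Set C := {X | IsCompactObj C X}

/-- The category is compactly generated. -/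
def CompactlyGenerated : Prop :=
  ∀ X : C, (∀ K ∈ compacts C, ∀ f : K ⟶ X, f = 0) → IsZero X

/-- Closure under direct summands (retracts), `smd`. -/
def smd (A : Set C) : Set C :=
  {X | ∃ Y ∈ A, ∃ (i : X ⟶ Y) (r : Y ⟶ X), i ≫ r = 𝟙 X}

/-- Closure of a class of objects under finite direct sums and extensions (`coprod`). -/
inductive extClosure (U : Set C) : C → Prop
  | of {X : C} : X ∈ U → extClosure U X
  | zero {X : C} : IsZero X → extClosure U X
  | ext {X Y Z : C} (f : X ⟶ Y) (g : Y ⟶ Z) (h : Z ⟶ X⟦(1 : ℤ)⟧) :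
      Triangle.mk f g h ∈ (distTriang C) → extClosure U X → extClosure U Z → extClosure U Y

/-- Closure of a class of objects under arbitrary coproducts, extensions and
direct summands. -/
inductive bigClosure (U : Set C) : C → Prop
  | of {X : C} : X ∈ U → bigClosure U X
  | zero {X : C} : IsZero X → bigClosure U X
  | coprod {α : Type v} (f : α → C) :
      (∀ i, bigClosure U (f i)) → ∀ {X : C}, (X ≅ ∐ f) → bigClosure U X
  | ext {X Y Z : C} (f : X ⟶ Y) (g : Y ⟶ Z) (h : Z ⟶ X⟦(1 : ℤ)⟧) :
      Triangle.mk f g h ∈ (distTriang C) → bigClosure U X → bigClosure U Z → bigClosure U Y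
  | retract {X Y : C} (i : X ⟶ Y) (r : Y ⟶ X) :
      i ≫ r = 𝟙 X → bigClosure U Y → bigClosure U X

/-- Closure of a class of objects under finite direct sums, `add`. -/
def addClosure (U : Set C) : Set C :=
  {X | ∃ (n : ℕ) (f : ULift.{v} (Fin n) → C), (∀ i, f i ∈ U) ∧ Nonempty (X ≅ ∐ f)}

/-- Closure of a class of objects under arbitrary coproducts, `Add`. -/
def bigAddClosure (U : Set C) : Set C :=
  {X | ∃ (α : Type v) (f : α → C), (∀ i, f i ∈ U) ∧ Nonempty (X ≅ ∐ f)}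

/-- `coprod_n(U)`. -/
def coprodPow (U : Set C) : ℕ → Set C
  | 0 => {X | IsZero X}
  | n + 1 => starSet C (addClosure C U) (coprodPow U n)

/-- `Coprod_n(U)`. -/
def coprodPowBig (U : Set C) : ℕ → Set C
  | 0 => {X | IsZero X}
  | n + 1 => starSet C (bigAddClosure C U) (coprodPowBig U n)

/-- `G[a,b] = ∪ { G^m : a ≤ m ≤ b }`. -/
def unionIcc (G : ℤ → Set C) (a b : ℤ) : Set C := ⋃ m ∈ Set.Icc a b, G m

/-- `G(-∞,b] = ∪ { G^m : m ≤ b }`. -/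
def unionIic (G : ℤ → Set C) (b : ℤ) : Set C := ⋃ m ∈ Set.Iic b, G m

/-- `G(-∞,∞) = ∪ { G^m : m ∈ ℤ }`. -/
def unionAll (G : ℤ → Set C) : Set C := ⋃ m : ℤ, G m

/-- `G^{[a,b]} = smd(coprod(G[a,b]))`. -/
def gInt (G : ℤ → Set C) (a b : ℤ) : Set C :=
  smd C {X | extClosure C (unionIcc C G a b) X}

/-- `G^{(-∞,b]} = smd(coprod(G(-∞,b]))`. -/
def gIic (G : ℤ → Set C) (b : ℤ) : Set C :=
  smd C {X | extClosure C (unionIic C G b) X}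

/-- `G^{[a,b]}_k = smd(coprod_k(G[a,b]))`. -/
def gIntPow (G : ℤ → Set C) (a b k : ℤ) : Set C :=
  smd C (coprodPow C (unionIcc C G a b) k.toNat)

/-- `Ḡ^{[a,b]}`. -/
def gBarInt (G : ℤ → Set C) (a b : ℤ) : Set C :=
  {X | bigClosure C (unionIcc C G a b) X}

/-- `Ḡ^{(-∞,b]}`. -/
def gBarIic (G : ℤ → Set C) (b : ℤ) : Set C :=
  {X | bigClosure C (unionIic C G b) X}

/-- `Ḡ^{[a,b]}_k = smd(Coprod_k(G[a,b]))`. -/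
def gBarIntPow (G : ℤ → Set C) (a b k : ℤ) : Set C :=
  smd C (coprodPowBig C (unionIcc C G a b) k.toNat)

/-- `M^G_n := G^{(-∞,-n]}`. -/
def MG (G : ℤ → Set C) (n : ℤ) : Set C := gIic C G (-n)

/-- `R^G_n := ⊥((M^G_n)^⊥)`, orthogonals taken in the whole category. -/
def RG (G : ℤ → Set C) (n : ℤ) : Set C := lOrth C (rOrth C (MG C G n))

/-- A pre-generating sequence. -/
structure IsPreGenSeq (G : ℤ → Set C) : Prop where
  compact : ∀ i : ℤ, G i ⊆ compacts C
  generates : smd C {X | extClosure C (unionAll C G) X} = compacts C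

/-- A generating sequence. -/
structure IsGenSeq (G : ℤ → Set C) extends IsPreGenSeq C G : Prop where
  shift_cond : ∀ n : ℤ,
    shiftSet C (-1) (G n) ∪ G n ∪ shiftSet C 1 (G n) ⊆ gInt C G (n - 1) (n + 1)

/-- A finite generating sequence. -/
structure IsFinGenSeq (G : ℤ → Set C) extends IsGenSeq C G : Prop where
  finite : ∀ i : ℤ, (G i).Finite

/-- ℕ-equivalence of generating sequences. -/
def GenSeqNEquiv (G G' : ℤ → Set C) : Prop :=
  ∃ N : ℤ, 0 ≤ N ∧ (∀ n : ℤ, G' n ⊆ gInt C G (n - N) (n + N)) ∧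
    ∀ n : ℤ, G n ⊆ gInt C G' (n - N) (n + N)

/-- ℕ-equivalence of (extended good) metrics. -/
def MetricNEquiv (M N : ℤ → Set C) : Prop :=
  ∃ n : ℤ, 0 ≤ n ∧ (∀ i : ℤ, M (i + n) ⊆ N i) ∧ ∀ i : ℤ, N (i + n) ⊆ M i

/-- An extended good metric. -/
structure IsExtGoodMetric (M : ℤ → Set C) : Prop where
  zero_mem : ∀ (n : ℤ) (X : C), IsZero X → X ∈ M n
  iso_closed : ∀ (n : ℤ) ⦃X Y : C⦄, (X ≅ Y) → X ∈ M n → Y ∈ M n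
  star_subset : ∀ n : ℤ, starSet C (M n) (M n) ⊆ M n
  shift_one : ∀ n : ℤ, shiftSet C 1 (M (n + 1)) ⊆ M n
  antitone : ∀ n : ℤ, M (n + 1) ⊆ M n
  shift_neg_one : ∀ n : ℤ, shiftSet C (-1) (M (n + 1)) ⊆ M n

/-- An orthogonal metric. -/
structure IsOrthMetric (M : ℤ → Set C) extends IsExtGoodMetric C M : Prop where
  orth : ∀ n : ℤ, lOrth C (rOrth C (M n)) = M n

/-- The closure of the compacts `T̄^c := ∩ₙ T^c ⋆ Rₙ`. -/
def closCompacts (Rm : ℤ → Set C) : Set C := ⋂ n : ℤ, starSet C (compacts C) (Rm n)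

/-- `(T, R, A)` is `G`-preapproximable. -/
structure IsGPreApprox (G Rm : ℤ → Set C) (A : ℤ) : Prop where
  orthMetric : IsOrthMetric C Rm
  A_pos : 0 < A
  cond0 : ∀ i : ℤ, MG C G i ⊆ ⋃ n ∈ {n : ℤ | |n| ≤ A}, shiftSet C n (MG C G (i + 1))
  cond1 : ∀ i : ℤ, MG C G (i + A) ⊆ Rm i ∩ compacts C
  cond2 : ∀ n : ℤ, ∃ N : ℤ, ∀ i : ℤ, N ≤ i → homZero C (G n) (Rm i)

/-- There is a distinguished triangle `E ⟶ F ⟶ D ⟶ ΣE` with `E ∈ S` and `D ∈ D`. -/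
def approxTriangle (F : C) (S D : Set C) : Prop :=
  ∃ (E Dd : C) (f : E ⟶ F) (g : F ⟶ Dd) (h : Dd ⟶ E⟦(1 : ℤ)⟧),
    Triangle.mk f g h ∈ (distTriang C) ∧ E ∈ S ∧ Dd ∈ D

/-- `(T, R, A)` is weakly `G`-approximable. -/
structure IsWeakGApprox (G Rm : ℤ → Set C) (A : ℤ) extends IsGPreApprox C G Rm A : Prop where
  hom_vanish : ∀ n i : ℤ, A ≤ n + i → homZero C (G n) (Rm i)
  approx : ∀ i : ℤ, ∀ F ∈ Rm i,
    approxTriangle C F (gBarInt C G (-A - i) (A - i)) (Rm (i + 1))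

/-- `(T, R, A)` is `G`-approximable. -/
structure IsGApprox (G Rm : ℤ → Set C) (A : ℤ) extends IsWeakGApprox C G Rm A : Prop where
  approx' : ∀ i : ℤ, ∀ F ∈ Rm i,
    approxTriangle C F (gBarIntPow C G (-A - i) (A - i) A) (Rm (i + 1))

/-- `(T, R, A)` is weakly `G`-quasiapproximable. -/
structure IsWeakGQuasiApprox (G Rm : ℤ → Set C) (A : ℤ) extends IsGPreApprox C G Rm A : Prop where
  hom_vanish : ∀ n i : ℤ, A ≤ n + i → homZero C (G n) (Rm i)
  approx : ∀ i : ℤ, ∀ F ∈ Rm i ∩ closCompacts C Rm,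
    approxTriangle C F (gBarInt C G (-A - i) (A - i)) (Rm (i + 1) ∩ closCompacts C Rm)

/-- `(T, R, A)` is `G`-quasiapproximable. -/
structure IsGQuasiApprox (G Rm : ℤ → Set C) (A : ℤ) extends IsWeakGQuasiApprox C G Rm A : Prop where
  approx' : ∀ i : ℤ, ∀ F ∈ Rm i ∩ closCompacts C Rm,
    approxTriangle C F (gBarIntPow C G (-A - i) (A - i) A) (Rm (i + 1) ∩ closCompacts C Rm)

/-- The coproduct of a sequence of objects. -/
noncomputable def seqCoprod (E : ℕ → C) : C := ∐ (fun n : ULift.{v} ℕ => E n.down)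

/-- The canonical inclusion into the coproduct of a sequence. -/
noncomputable def seqInj (E : ℕ → C) (n : ℕ) : E n ⟶ seqCoprod C E :=
  Sigma.ι (fun n : ULift.{v} ℕ => E n.down) (ULift.up n)

/-- The map `1 - shift` on the coproduct of a sequence. -/
noncomputable def oneMinusShift (E : ℕ → C) (e : ∀ n, E n ⟶ E (n + 1)) :
    seqCoprod C E ⟶ seqCoprod C E :=
  Sigma.desc (fun n => seqInj C E n.down - e n.down ≫ seqInj C E (n.down + 1))

/-- `H`, equipped with `π`, `δ`, is a homotopy colimit of the sequence `E`. -/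
def IsHocolim (E : ℕ → C) (e : ∀ n, E n ⟶ E (n + 1)) (H : C)
    (π : seqCoprod C E ⟶ H) (δ : H ⟶ (seqCoprod C E)⟦(1 : ℤ)⟧) : Prop :=
  Triangle.mk (oneMinusShift C E e) π δ ∈ (distTriang C)

/-- A single compact generator. -/
def IsCompactGenerator (G₀ : C) : Prop :=
  IsCompactObj C G₀ ∧ ∀ X : C, (∀ n : ℤ, ∀ f : (shiftFunctor C n).obj G₀ ⟶ X, f = 0) → IsZero X

/-- The strictly full subcategory `{Σʲ G₀}`. -/
def singletonShift (G₀ : C) (j : ℤ) : Set C :=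
  {X | Nonempty (X ≅ (shiftFunctor C j).obj G₀)}

/-- The generating sequence `Gⁿ := {Σ⁻ⁿ G₀}`. -/
def genSeqNeg (G₀ : C) (n : ℤ) : Set C := singletonShift C G₀ (-n)

/-- The generating sequence `Gⁿ := {Σⁿ G₀}`. -/
def genSeqPos (G₀ : C) (n : ℤ) : Set C := singletonShift C G₀ n

section Helpers

variable {C}

set_option linter.unusedSectionVars false

lemma ex2 {X Y Z : C} {f : X ⟶ Y} {g : Y ⟶ Z} {h : Z ⟶ X⟦(1 : ℤ)⟧}
    (hT : Triangle.mk f g h ∈ distTriang C) {W : C} (k : Y ⟶ W) (hk : f ≫ k = 0) :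
    ∃ l : Z ⟶ W, k = g ≫ l := Triangle.yoneda_exact₂ _ hT k hk

lemma ex3 {X Y Z : C} {f : X ⟶ Y} {g : Y ⟶ Z} {h : Z ⟶ X⟦(1 : ℤ)⟧}
    (hT : Triangle.mk f g h ∈ distTriang C) {W : C} (k : Z ⟶ W) (hk : g ≫ k = 0) :
    ∃ l : X⟦(1 : ℤ)⟧ ⟶ W, k = h ≫ l := Triangle.yoneda_exact₃ _ hT k hk

/-- exactness at `ΣX` -/
lemma ex4 {X Y Z : C} {f : X ⟶ Y} {g : Y ⟶ Z} {h : Z ⟶ X⟦(1 : ℤ)⟧}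
    (hT : Triangle.mk f g h ∈ distTriang C) {W : C} (k : X⟦(1 : ℤ)⟧ ⟶ W) (hk : h ≫ k = 0) :
    ∃ l : Y⟦(1 : ℤ)⟧ ⟶ W, k = f⟦(1 : ℤ)⟧' ≫ l := by
  obtain ⟨l, hl⟩ : ∃ l : Y⟦(1 : ℤ)⟧ ⟶ W, k = (-(f⟦(1 : ℤ)⟧')) ≫ l :=
    Triangle.yoneda_exact₃ _ (rot_of_distTriang _ hT) k hk
  refine ⟨-l, hl.trans ?_⟩
  rw [Preadditive.neg_comp, Preadditive.comp_neg]

/-- exactness at `ΣY` -/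
lemma ex5 {X Y Z : C} {f : X ⟶ Y} {g : Y ⟶ Z} {h : Z ⟶ X⟦(1 : ℤ)⟧}
    (hT : Triangle.mk f g h ∈ distTriang C) {W : C} (k : Y⟦(1 : ℤ)⟧ ⟶ W)
    (hk : f⟦(1 : ℤ)⟧' ≫ k = 0) :
    ∃ l : Z⟦(1 : ℤ)⟧ ⟶ W, k = g⟦(1 : ℤ)⟧' ≫ l :=
  ex4 (rot_of_distTriang _ hT) k (by
    change (-(f⟦(1 : ℤ)⟧')) ≫ k = 0
    rw [Preadditive.neg_comp, hk, neg_zero])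

/-- exactness at `ΣZ` -/
lemma ex6 {X Y Z : C} {f : X ⟶ Y} {g : Y ⟶ Z} {h : Z ⟶ X⟦(1 : ℤ)⟧}
    (hT : Triangle.mk f g h ∈ distTriang C) {W : C} (k : Z⟦(1 : ℤ)⟧ ⟶ W)
    (hk : g⟦(1 : ℤ)⟧' ≫ k = 0) :
    ∃ l : X⟦(1 : ℤ)⟧⟦(1 : ℤ)⟧ ⟶ W, k = h⟦(1 : ℤ)⟧' ≫ l :=
  ex5 (rot_of_distTriang _ hT) k hk

lemma z12 {X Y Z : C} {f : X ⟶ Y} {g : Y ⟶ Z} {h : Z ⟶ X⟦(1 : ℤ)⟧}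
    (hT : Triangle.mk f g h ∈ distTriang C) : f ≫ g = 0 := comp_distTriang_mor_zero₁₂ _ hT
lemma z23 {X Y Z : C} {f : X ⟶ Y} {g : Y ⟶ Z} {h : Z ⟶ X⟦(1 : ℤ)⟧}
    (hT : Triangle.mk f g h ∈ distTriang C) : g ≫ h = 0 := comp_distTriang_mor_zero₂₃ _ hT
lemma z31 {X Y Z : C} {f : X ⟶ Y} {g : Y ⟶ Z} {h : Z ⟶ X⟦(1 : ℤ)⟧}
    (hT : Triangle.mk f g h ∈ distTriang C) : h ≫ f⟦(1 : ℤ)⟧' = 0 :=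
  comp_distTriang_mor_zero₃₁ _ hT

lemma fill₃ {X E E₁ F F₁ : C} {x : X ⟶ E} {p : E ⟶ E₁} {h' : E₁ ⟶ X⟦(1 : ℤ)⟧}
    {y : X ⟶ F} {q : F ⟶ F₁} {h : F₁ ⟶ X⟦(1 : ℤ)⟧}
    (hE : Triangle.mk x p h' ∈ distTriang C) (hF : Triangle.mk y q h ∈ distTriang C)
    (φ : E ⟶ F) (c1 : x ≫ φ = y) : ∃ u : E₁ ⟶ F₁, p ≫ u = φ ≫ q ∧ h' = u ≫ h := by
  obtain ⟨u, u1, u2⟩ := complete_distinguished_triangle_morphism _ _ hE hF (𝟙 X) φ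
    (c1.trans (Category.id_comp y).symm)
  refine ⟨u, u1, Eq.trans ?_ u2⟩
  change h' = h' ≫ (𝟙 X)⟦(1 : ℤ)⟧'
  rw [CategoryTheory.Functor.map_id, Category.comp_id]

lemma fill₂ {X E E₁ F F₁ : C} {x : X ⟶ E} {p : E ⟶ E₁} {h' : E₁ ⟶ X⟦(1 : ℤ)⟧}
    {y : X ⟶ F} {q : F ⟶ F₁} {h : F₁ ⟶ X⟦(1 : ℤ)⟧}
    (hE : Triangle.mk x p h' ∈ distTriang C) (hF : Triangle.mk y q h ∈ distTriang C)
    (u : E₁ ⟶ F₁) (c3 : h' = u ≫ h) : ∃ φ : E ⟶ F, x ≫ φ = y ∧ p ≫ u = φ ≫ q := by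
  obtain ⟨φ, u1, u2⟩ := complete_distinguished_triangle_morphism₂ _ _ hE hF (𝟙 X) u (by
    change h' ≫ (𝟙 X)⟦(1 : ℤ)⟧' = u ≫ h
    rw [CategoryTheory.Functor.map_id, Category.comp_id, c3])
  exact ⟨φ, u1.trans (Category.id_comp y), u2⟩

/-- `φ` behaves on maps into `R^⊥` as if its cone were in `⊥(R^⊥)`. -/
def REq (R : Set C) {E F : C} (φ : E ⟶ F) : Prop :=
  ∀ Y ∈ rOrth C R, (∀ f : F ⟶ Y, φ ≫ f = 0 → f = 0) ∧
    ∀ g : E⟦(1 : ℤ)⟧ ⟶ Y, ∃ g' : F⟦(1 : ℤ)⟧ ⟶ Y, φ⟦(1 : ℤ)⟧' ≫ g' = g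

lemma REq.of_tri {R : Set C} {E F D : C} {φ : E ⟶ F} {g : F ⟶ D} {h : D ⟶ E⟦(1 : ℤ)⟧}
    (hT : Triangle.mk φ g h ∈ distTriang C) (hD : D ∈ R) : REq R φ := by
  intro Y hY
  constructor
  · intro f hf
    obtain ⟨l, rfl⟩ := ex2 hT f hf
    rw [hY _ hD l, comp_zero]
  · intro k
    obtain ⟨l, hl⟩ := ex4 hT k (hY _ hD _)
    exact ⟨l, hl.symm⟩

lemma REq.cone_mem {R : Set C} (hR : lOrth C (rOrth C R) = R) {E F D : C} {φ : E ⟶ F}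
    {g : F ⟶ D} {h : D ⟶ E⟦(1 : ℤ)⟧} (hT : Triangle.mk φ g h ∈ distTriang C)
    (hφ : REq R φ) : D ∈ R := by
  rw [← hR]
  intro Y hY s
  have h1 := (hφ Y hY).1 (g ≫ s) (by rw [← Category.assoc, z12 hT, zero_comp])
  obtain ⟨k, rfl⟩ := ex3 hT s h1
  obtain ⟨k', rfl⟩ := (hφ Y hY).2 k
  rw [← Category.assoc, z31 hT, zero_comp]

section Four

variable {R : Set C} {X E E₁ F F₁ : C} {x : X ⟶ E} {p : E ⟶ E₁} {h' : E₁ ⟶ X⟦(1 : ℤ)⟧}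
  {y : X ⟶ F} {q : F ⟶ F₁} {h : F₁ ⟶ X⟦(1 : ℤ)⟧} {φ : E ⟶ F} {u : E₁ ⟶ F₁}

lemma REq.up (hE : Triangle.mk x p h' ∈ distTriang C) (hF : Triangle.mk y q h ∈ distTriang C)
    (c1 : x ≫ φ = y) (c2 : p ≫ u = φ ≫ q) (c3 : h' = u ≫ h) (hu : REq R u) : REq R φ := by
  intro Y hY
  obtain ⟨inj, surj⟩ := hu Y hY
  constructor
  · intro f hf
    obtain ⟨g, rfl⟩ := ex2 hF f (by rw [← c1, Category.assoc, hf, comp_zero])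
    obtain ⟨k, hk⟩ := ex3 hE (u ≫ g) (by rw [← Category.assoc, c2, Category.assoc, hf])
    have : g - h ≫ k = 0 := inj _ (by
      rw [Preadditive.comp_sub, hk, c3, Category.assoc, sub_self])
    rw [sub_eq_zero.1 this, ← Category.assoc, z23 hF, zero_comp]
  · intro g
    have h0 : h ≫ x⟦(1 : ℤ)⟧' ≫ g = 0 := inj _ (by
      rw [← Category.assoc, ← c3, ← Category.assoc, z31 hE, zero_comp])
    obtain ⟨g1, hg1⟩ := ex4 hF _ h0
    obtain ⟨g2, hg2⟩ := ex5 hE (g - φ⟦(1 : ℤ)⟧' ≫ g1) (by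
      rw [Preadditive.comp_sub, hg1, ← c1, Functor.map_comp, Category.assoc, sub_self])
    obtain ⟨g3, rfl⟩ := surj g2
    refine ⟨g1 + q⟦(1 : ℤ)⟧' ≫ g3, ?_⟩
    rw [← Category.assoc, ← Functor.map_comp, c2, Functor.map_comp, Category.assoc] at hg2
    rw [Preadditive.comp_add, ← hg2]
    abel

lemma REq.down (hE : Triangle.mk x p h' ∈ distTriang C) (hF : Triangle.mk y q h ∈ distTriang C)
    (c1 : x ≫ φ = y) (c2 : p ≫ u = φ ≫ q) (c3 : h' = u ≫ h) (hφ : REq R φ) : REq R u := by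
  intro Y hY
  obtain ⟨inj, surj⟩ := hφ Y hY
  constructor
  · intro f hf
    have h1 := inj (q ≫ f) (by rw [← Category.assoc, ← c2, Category.assoc, hf, comp_zero])
    obtain ⟨g, rfl⟩ := ex3 hF f h1
    obtain ⟨g2, rfl⟩ := ex4 hE g (by rw [c3, Category.assoc, hf])
    obtain ⟨g3, rfl⟩ := surj g2
    rw [← Category.assoc (x⟦(1 : ℤ)⟧'), ← Functor.map_comp, c1, ← Category.assoc, z31 hF,
      zero_comp]
  · intro g
    obtain ⟨g1, hg1⟩ := surj (p⟦(1 : ℤ)⟧' ≫ g)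
    obtain ⟨g2, rfl⟩ := ex5 hF g1 (by
      rw [← c1, Functor.map_comp, Category.assoc, hg1, ← Category.assoc, ← Functor.map_comp,
        z12 hE, Functor.map_zero, zero_comp])
    obtain ⟨g4, hg4⟩ := ex6 hE (g - u⟦(1 : ℤ)⟧' ≫ g2) (by
      rw [Preadditive.comp_sub, ← hg1, ← Category.assoc, ← Category.assoc, ← Functor.map_comp,
        ← Functor.map_comp, c2, sub_self])
    refine ⟨g2 + h⟦(1 : ℤ)⟧' ≫ g4, ?_⟩
    rw [c3, Functor.map_comp, Category.assoc] at hg4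
    rw [Preadditive.comp_add, ← hg4]
    abel

end Four

/-- Attach an approximation of the cone. -/
lemma attach {R : Set C} {X F F₁ E' : C} {y : X ⟶ F} {q : F ⟶ F₁} {h : F₁ ⟶ X⟦(1 : ℤ)⟧}
    (hF : Triangle.mk y q h ∈ distTriang C) (u : E' ⟶ F₁) (hu : REq R u) :
    ∃ (E : C) (x : X ⟶ E) (p : E ⟶ E') (φ : E ⟶ F),
      Triangle.mk x p (u ≫ h) ∈ distTriang C ∧ x ≫ φ = y ∧ p ≫ u = φ ≫ q ∧ REq R φ := by
  obtain ⟨E, x, p, hE⟩ := distinguished_cocone_triangle₂ (u ≫ h)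
  obtain ⟨φ, h1', h2'⟩ := fill₂ hE hF u rfl
  exact ⟨E, x, p, φ, hE, h1', h2', REq.up hE hF h1' h2' rfl hu⟩

/-- An extension of retracts is a retract of an extension. -/
lemma star_smd {S S' : Set C} {X Y Z : C} {f : X ⟶ Y} {g : Y ⟶ Z} {h : Z ⟶ X⟦(1 : ℤ)⟧}
    (hT : Triangle.mk f g h ∈ distTriang C) (hX : X ∈ S) (hZ : Z ∈ smd C S') :
    Y ∈ smd C (starSet C S S') := by
  obtain ⟨Z', hZ', i, r, hir⟩ := hZ
  obtain ⟨Y', f', g', hT'⟩ := distinguished_cocone_triangle₂ (r ≫ h)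
  obtain ⟨a, a1', a2'⟩ := fill₂ hT hT' i (by rw [← Category.assoc, hir, Category.id_comp])
  obtain ⟨b, b1', b2'⟩ := fill₂ hT' hT r rfl
  obtain ⟨z, hz⟩ := ex2 hT (a ≫ b - 𝟙 Y) (by
    rw [Preadditive.comp_sub, ← Category.assoc, a1', b1', Category.comp_id, sub_self])
  have h0 : (a ≫ b - 𝟙 Y) ≫ g = 0 := by
    rw [Preadditive.sub_comp, Category.assoc, ← b2', ← Category.assoc, ← a2', Category.assoc,
      hir, Category.comp_id, Category.id_comp, sub_self]
  have hsq : (a ≫ b - 𝟙 Y) ≫ (a ≫ b - 𝟙 Y) = 0 := by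
    rw [hz, ← Category.assoc, ← hz, h0, zero_comp]
  refine ⟨Y', ⟨X, Z', f', g', _, hT', hX, hZ'⟩, a, b ≫ (𝟙 Y - (a ≫ b - 𝟙 Y)), ?_⟩
  have e1 : a ≫ b = 𝟙 Y + (a ≫ b - 𝟙 Y) := by abel
  rw [← Category.assoc]
  generalize a ≫ b - 𝟙 Y = N at *
  rw [e1]
  simp [hsq]

lemma strict_comp {U R R' : Set C} (hR : lOrth C (rOrth C R) = R) (k : ℕ)
    (H : ∀ D ∈ R, ∃ (E' : C) (φ' : E' ⟶ D), E' ∈ smd C (coprodPowBig C U k) ∧ REq R' φ')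
    (m : ℕ) : ∀ (E F : C) (φ : E ⟶ F), E ∈ coprodPowBig C U m → REq R φ →
      ∃ (E₂ : C) (a : E ⟶ E₂) (φ₂ : E₂ ⟶ F), E₂ ∈ smd C (coprodPowBig C U (k + m)) ∧
        a ≫ φ₂ = φ ∧ REq R' φ₂ := by
  induction m with
  | zero =>
    intro E F φ hE hφ
    have hE' : IsZero E := hE
    have hF : F ∈ R := by
      rw [← hR]
      intro Y hY f
      exact (hφ Y hY).1 f (hE'.eq_of_src _ _)
    obtain ⟨E', φ', h1, h2⟩ := H F hF
    exact ⟨E', 0, φ', h1, hE'.eq_of_src _ _, h2⟩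
  | succ m ih =>
    intro E F φ hE hφ
    obtain ⟨X, E₁, x, p, h', hT, hX, hE₁⟩ := hE
    obtain ⟨F₁, q, h, hF⟩ := distinguished_cocone_triangle (x ≫ φ)
    obtain ⟨u, u1', u2'⟩ := fill₃ hT hF φ rfl
    obtain ⟨E₃, v, w, hE₃, hvw, hw⟩ := ih E₁ F₁ u hE₁ (REq.down hT hF rfl u1' u2' hφ)
    obtain ⟨E₂, x₂, p₂, φ₂, hT₂, c1, c2, hφ₂⟩ := attach hF w hw
    obtain ⟨a, a1', a2'⟩ := fill₂ hT hT₂ v (by rw [u2', ← hvw, Category.assoc])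
    obtain ⟨s, hs'⟩ : ∃ s : E ⟶ X, a ≫ φ₂ - φ = s ≫ x ≫ φ := Triangle.coyoneda_exact₂ _ hF (a ≫ φ₂ - φ) (by
      change (a ≫ φ₂ - φ) ≫ q = 0
      rw [Preadditive.sub_comp, Category.assoc, ← c2, ← Category.assoc, ← a2', Category.assoc,
        hvw, u1', sub_self])
    refine ⟨E₂, a - s ≫ x₂, φ₂, star_smd hT₂ hX hE₃, ?_, hφ₂⟩
    rw [Preadditive.sub_comp, Category.assoc, c1, ← hs']
    abel

/-- Complement of a retract. -/
lemma exists_compl {X Y : C} (i : X ⟶ Y) (r : Y ⟶ X) (hir : i ≫ r = 𝟙 X) :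
    ∃ (W : C) (c : W ⟶ Y) (d : Y ⟶ W), c ≫ d = 𝟙 W ∧ c ≫ r = 0 ∧ i ≫ d = 0 ∧
      r ≫ i + d ≫ c = 𝟙 Y := by
  obtain ⟨W, d, h, hT⟩ := distinguished_cocone_triangle i
  have h0 : h = 0 := by
    have e : h ≫ i⟦(1 : ℤ)⟧' = 0 := z31 hT
    have e2 : (h ≫ i⟦(1 : ℤ)⟧') ≫ r⟦(1 : ℤ)⟧' = h := by
      rw [Category.assoc, ← Functor.map_comp, hir, CategoryTheory.Functor.map_id, Category.comp_id]
    rw [← e2, e, zero_comp]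
  have hd : Epi d := Triangle.epi₂ _ hT h0
  obtain ⟨c, hc⟩ := ex2 hT (𝟙 Y - r ≫ i) (by simp [reassoc_of% hir])
  have hid : i ≫ d = 0 := z12 hT
  refine ⟨W, c, d, ?_, ?_, hid, ?_⟩
  · rw [← cancel_epi d, ← Category.assoc, ← hc]
    simp [hid]
  · rw [← cancel_epi d, ← Category.assoc, ← hc]
    simp [hir]
  · rw [← hc]; abel

lemma smd_comp {U R R' : Set C} (hR : lOrth C (rOrth C R) = R) (k : ℕ)
    (H : ∀ D ∈ R, ∃ (E' : C) (φ' : E' ⟶ D), E' ∈ smd C (coprodPowBig C U k) ∧ REq R' φ')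
    (m : ℕ) (E F : C) (φ : E ⟶ F) (hE : E ∈ smd C (coprodPowBig C U m)) (hφ : REq R φ) :
      ∃ (E₂ : C) (a : E ⟶ E₂) (φ₂ : E₂ ⟶ F), E₂ ∈ smd C (coprodPowBig C U (k + m)) ∧
        a ≫ φ₂ = φ ∧ REq R' φ₂ := by
  obtain ⟨B, hB, i, r, hir⟩ := hE
  obtain ⟨W, c, d, hcd, hcr, hid, hsum⟩ := exists_compl i r hir
  let ψ : B ⟶ F ⊞ W := r ≫ φ ≫ biprod.inl + d ≫ biprod.inr
  have hiψ : i ≫ ψ = φ ≫ biprod.inl := by simp [ψ, reassoc_of% hir, reassoc_of% hid]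
  have hcψ : c ≫ ψ = biprod.inr := by simp [ψ, reassoc_of% hcr, reassoc_of% hcd]
  have hψ : REq R ψ := by
    intro Y hY
    obtain ⟨inj, surj⟩ := hφ Y hY
    constructor
    · intro f hf
      apply biprod.hom_ext'
      · rw [comp_zero]
        apply inj
        rw [← Category.assoc, ← hiψ, Category.assoc, hf, comp_zero]
      · rw [comp_zero, ← hcψ, Category.assoc, hf, comp_zero]
    · intro g
      obtain ⟨g1, hg1⟩ := surj (i⟦(1 : ℤ)⟧' ≫ g)
      refine ⟨(biprod.fst : F ⊞ W ⟶ F)⟦(1 : ℤ)⟧' ≫ g1 +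
        (biprod.snd : F ⊞ W ⟶ W)⟦(1 : ℤ)⟧' ≫ c⟦(1 : ℤ)⟧' ≫ g, ?_⟩
      have e1 : ψ ≫ biprod.fst = r ≫ φ := by simp [ψ]
      have e2 : ψ ≫ biprod.snd = d := by simp [ψ]
      rw [Preadditive.comp_add, ← Category.assoc, ← Functor.map_comp, e1, ← Category.assoc,
        ← Functor.map_comp, e2, Functor.map_comp, Category.assoc, hg1, ← Category.assoc,
        ← Category.assoc, ← Functor.map_comp, ← Functor.map_comp, ← Preadditive.add_comp,
        ← Functor.map_add, hsum, CategoryTheory.Functor.map_id, Category.id_comp]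
  obtain ⟨B₂, a, φ₂, hB₂, ha, hφ₂⟩ := strict_comp hR k H m B (F ⊞ W) ψ hB hψ
  have hcaφ : (c ≫ a) ≫ φ₂ = biprod.inr := by rw [Category.assoc, ha, hcψ]
  obtain ⟨E₂, κ, l, hκl, hκt, hbl, hsum₂⟩ := exists_compl (c ≫ a) (φ₂ ≫ biprod.snd) (by
    rw [← Category.assoc, hcaφ, biprod.inr_snd])
  obtain ⟨B₃, hB₃, i₃, r₃, hir₃⟩ := hB₂
  refine ⟨E₂, i ≫ a ≫ l, κ ≫ φ₂ ≫ biprod.fst, ⟨B₃, hB₃, κ ≫ i₃, r₃ ≫ l, ?_⟩, ?_, ?_⟩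
  · simp [reassoc_of% hir₃, hκl]
  · have e : l ≫ κ = 𝟙 B₂ - (φ₂ ≫ biprod.snd) ≫ c ≫ a := by rw [← hsum₂]; abel
    have e' : c ≫ a ≫ φ₂ = biprod.inr := by simpa using hcaφ
    calc (i ≫ a ≫ l) ≫ κ ≫ φ₂ ≫ biprod.fst
        = i ≫ a ≫ (l ≫ κ) ≫ φ₂ ≫ biprod.fst := by simp only [Category.assoc]
      _ = (i ≫ (a ≫ φ₂)) ≫ biprod.fst := by
          rw [e]
          simp only [Preadditive.sub_comp, Preadditive.comp_sub, Category.assoc,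
            Category.id_comp, reassoc_of% e', biprod.inr_fst, comp_zero, sub_zero]
      _ = φ := by rw [ha, hiψ]; simp
  · intro Y hY
    obtain ⟨inj, surj⟩ := hφ₂ Y hY
    constructor
    · intro f hf
      have e' : c ≫ a ≫ φ₂ = biprod.inr := by simpa using hcaφ
      have h1 : (biprod.fst : F ⊞ W ⟶ F) ≫ f = 0 := by
        apply inj
        rw [← Category.id_comp φ₂, ← hsum₂]
        simp only [Category.assoc] at hf
        simp [Preadditive.add_comp, Category.assoc, reassoc_of% e', hf]
      have h2 : (biprod.inl : F ⟶ F ⊞ W) ≫ biprod.fst ≫ f = 0 := by rw [h1, comp_zero]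
      simpa using h2
    · intro g
      obtain ⟨g1, hg1⟩ := surj (l⟦(1 : ℤ)⟧' ≫ g)
      refine ⟨(biprod.inl : F ⟶ F ⊞ W)⟦(1 : ℤ)⟧' ≫ g1, ?_⟩
      have e : (κ ≫ φ₂ ≫ biprod.fst) ≫ (biprod.inl : F ⟶ F ⊞ W) = κ ≫ φ₂ := by
        have e1 : (biprod.fst : F ⊞ W ⟶ F) ≫ (biprod.inl : F ⟶ F ⊞ W) =
            𝟙 _ - biprod.snd ≫ biprod.inr := by
          rw [← biprod.total]; abel
        have e2 : κ ≫ φ₂ ≫ (biprod.snd : F ⊞ W ⟶ W) = 0 := hκt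
        simp only [Category.assoc, e1, Preadditive.comp_sub, Category.comp_id,
          reassoc_of% e2, zero_comp, sub_zero]
      rw [← Category.assoc, ← Functor.map_comp, e, Functor.map_comp, Category.assoc, hg1,
        ← Category.assoc, ← Functor.map_comp, hκl, CategoryTheory.Functor.map_id, Category.id_comp]

/-- Iterating a step. -/
lemma iterate_steps (S Q : ℕ → Set C) (F : C)
    (h0 : ∃ (E : C) (φ : E ⟶ F), E ∈ S 0 ∧ REq (Q 0) φ)
    (hs : ∀ (n : ℕ) (E : C) (φ : E ⟶ F), E ∈ S n → REq (Q n) φ →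
      ∃ (E₂ : C) (a : E ⟶ E₂) (φ₂ : E₂ ⟶ F), E₂ ∈ S (n + 1) ∧ a ≫ φ₂ = φ ∧ REq (Q (n + 1)) φ₂) :
    ∃ (E : ℕ → C) (e : ∀ n, E n ⟶ E (n + 1)) (φ : ∀ n, E n ⟶ F),
      (∀ n, e n ≫ φ (n + 1) = φ n) ∧ ∀ n, E n ∈ S n ∧ REq (Q n) (φ n) := by
  choose E₀ φ₀ hE₀ hφ₀ using h0
  choose nE na nφ hnE hnc hnφ using hs
  let St : ℕ → Type _ := fun n => {P : (Σ E : C, (E ⟶ F)) // P.1 ∈ S n ∧ REq (Q n) P.2}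
  let seq : ∀ n, St n := fun n => Nat.rec (motive := St) ⟨⟨E₀, φ₀⟩, hE₀, hφ₀⟩
    (fun n P => ⟨⟨nE n P.1.1 P.1.2 P.2.1 P.2.2, nφ n P.1.1 P.1.2 P.2.1 P.2.2⟩,
      hnE n P.1.1 P.1.2 P.2.1 P.2.2, hnφ n P.1.1 P.1.2 P.2.1 P.2.2⟩) n
  exact ⟨fun n => (seq n).1.1, fun n => na n _ _ (seq n).2.1 (seq n).2.2,
    fun n => (seq n).1.2, fun n => hnc n _ _ (seq n).2.1 (seq n).2.2, fun n => (seq n).2⟩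

lemma unionIcc_mono (G : ℤ → Set C) {a b a' b' : ℤ} (h : a' ≤ a) (h' : b ≤ b') :
    unionIcc C G a b ⊆ unionIcc C G a' b' :=
  Set.biUnion_subset_biUnion_left (Set.Icc_subset_Icc h h')

lemma bigClosure_mono {U V : Set C} (h : U ⊆ V) {X : C} (hX : bigClosure C U X) :
    bigClosure C V X := by
  induction hX with
  | of hX => exact .of (h hX)
  | zero hX => exact .zero hX
  | coprod f _ e ih => exact .coprod f ih e
  | ext f g k hT _ _ i1 i2 => exact .ext f g k hT i1 i2
  | retract i r hir _ ih => exact .retract i r hir ih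

lemma coprodPowBig_mono {U V : Set C} (h : U ⊆ V) (n : ℕ) :
    coprodPowBig C U n ⊆ coprodPowBig C V n := by
  induction n with
  | zero => exact subset_rfl
  | succ n ih =>
    rintro Y ⟨X, Z, f, g, k, hT, ⟨α, t, ht, e⟩, hZ⟩
    exact ⟨X, Z, f, g, k, hT, ⟨α, t, fun i => h (ht i), e⟩, ih hZ⟩

lemma smd_mono {S S' : Set C} (h : S ⊆ S') : smd C S ⊆ smd C S' := by
  rintro X ⟨Y, hY, r⟩
  exact ⟨Y, h hY, r⟩

end Helpers

theorem statement_7 (G Rm : ℤ → Set C) (A : ℤ)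
    (hcg : CompactlyGenerated C) (hG : IsGenSeq C G) (hR : IsOrthMetric C Rm) (hA : 0 < A)
    (happrox : ∀ i : ℤ, ∀ F ∈ Rm i,
      approxTriangle C F (gBarInt C G (-A - i) (A - i)) (Rm (i + 1))) :
    ((∀ i j : ℤ, i < j → ∀ F ∈ Rm i,
        approxTriangle C F (gBarInt C G (-A - j + 1) (A - i)) (Rm j)) ∧
      (∀ i : ℤ, ∀ F ∈ Rm i,
        ∃ (E : ℕ → C) (e : ∀ n, E n ⟶ E (n + 1)) (φ : ∀ n, E n ⟶ F),
          (∀ n, e n ≫ φ (n + 1) = φ n) ∧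
          ∀ n : ℕ, ∃ (D : C) (g : F ⟶ D) (h : D ⟶ (E n)⟦(1 : ℤ)⟧),
            Triangle.mk (φ n) g h ∈ (distTriang C) ∧
            E n ∈ gBarInt C G (-A - (n : ℤ) - i) (A - i) ∧ D ∈ Rm (i + (n : ℤ) + 1))) ∧
    ((∀ i : ℤ, ∀ F ∈ Rm i,
        approxTriangle C F (gBarIntPow C G (-A - i) (A - i) A) (Rm (i + 1))) →
      (∀ i j : ℤ, i < j → ∀ F ∈ Rm i,
        approxTriangle C F (gBarIntPow C G (-A - j + 1) (A - i) ((j - i) * A)) (Rm j)) ∧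
      (∀ i : ℤ, ∀ F ∈ Rm i,
        ∃ (E : ℕ → C) (e : ∀ n, E n ⟶ E (n + 1)) (φ : ∀ n, E n ⟶ F),
          (∀ n, e n ≫ φ (n + 1) = φ n) ∧
          ∀ n : ℕ, ∃ (D : C) (g : F ⟶ D) (h : D ⟶ (E n)⟦(1 : ℤ)⟧),
            Triangle.mk (φ n) g h ∈ (distTriang C) ∧
            E n ∈ gBarIntPow C G (-A - (n : ℤ) - i) (A - i) (((n : ℤ) + 1) * A) ∧
            D ∈ Rm (i + (n : ℤ) + 1))) := by
  have main : ∀ (S : ℤ → ℕ → Set C) (_ : ∀ i : ℤ, ∀ F ∈ Rm i,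
        ∃ (E : ℕ → C) (e : ∀ n, E n ⟶ E (n + 1)) (φ : ∀ n, E n ⟶ F),
          (∀ n, e n ≫ φ (n + 1) = φ n) ∧
          ∀ n : ℕ, E n ∈ S i n ∧ REq (Rm (i + (n : ℤ) + 1)) (φ n)),
      (∀ i j : ℤ, i < j → ∀ F ∈ Rm i, approxTriangle C F (S i (j - i - 1).toNat) (Rm j)) ∧
      (∀ i : ℤ, ∀ F ∈ Rm i,
        ∃ (E : ℕ → C) (e : ∀ n, E n ⟶ E (n + 1)) (φ : ∀ n, E n ⟶ F),
          (∀ n, e n ≫ φ (n + 1) = φ n) ∧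
          ∀ n : ℕ, ∃ (D : C) (g : F ⟶ D) (h : D ⟶ (E n)⟦(1 : ℤ)⟧),
            Triangle.mk (φ n) g h ∈ (distTriang C) ∧
            E n ∈ S i n ∧ D ∈ Rm (i + (n : ℤ) + 1)) := by
    intro S hS
    have two : ∀ i : ℤ, ∀ F ∈ Rm i,
        ∃ (E : ℕ → C) (e : ∀ n, E n ⟶ E (n + 1)) (φ : ∀ n, E n ⟶ F),
          (∀ n, e n ≫ φ (n + 1) = φ n) ∧
          ∀ n : ℕ, ∃ (D : C) (g : F ⟶ D) (h : D ⟶ (E n)⟦(1 : ℤ)⟧),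
            Triangle.mk (φ n) g h ∈ (distTriang C) ∧
            E n ∈ S i n ∧ D ∈ Rm (i + (n : ℤ) + 1) := by
      intro i F hF
      obtain ⟨E, e, φ, he, h⟩ := hS i F hF
      refine ⟨E, e, φ, he, fun n => ?_⟩
      obtain ⟨D, g, k, hT⟩ := distinguished_cocone_triangle (φ n)
      exact ⟨D, g, k, hT, (h n).1, REq.cone_mem (hR.orth _) hT (h n).2⟩
    refine ⟨fun i j hij F hF => ?_, two⟩
    obtain ⟨E, e, φ, he, h⟩ := two i F hF
    obtain ⟨D, g, k, hT, hE, hD⟩ := h (j - i - 1).toNat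
    have : i + ((j - i - 1).toNat : ℤ) + 1 = j := by omega
    rw [this] at hD
    exact ⟨_, D, _, g, k, hT, hE, hD⟩
  refine ⟨?_, fun happ => ?_⟩
  · obtain ⟨h1, h2⟩ := main (fun i n => gBarInt C G (-A - (n : ℤ) - i) (A - i)) (by
      intro i F hF
      apply iterate_steps (fun n => gBarInt C G (-A - (n : ℤ) - i) (A - i))
        (fun n => Rm (i + (n : ℤ) + 1)) F
      · obtain ⟨E, D, f, g, h, hT, hE, hD⟩ := happrox i F hF
        refine ⟨E, f, by simpa using hE, REq.of_tri hT (by simpa using hD)⟩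
      · intro n E φ hE hφ
        obtain ⟨D, q, h, hT⟩ := distinguished_cocone_triangle φ
        have hD := REq.cone_mem (hR.orth _) hT hφ
        obtain ⟨E', D', f, g, h', hT', hE', hD'⟩ := happrox _ D hD
        have hD'' : D' ∈ Rm (i + ((n + 1 : ℕ) : ℤ) + 1) := by
          have : i + ((n + 1 : ℕ) : ℤ) + 1 = i + (n : ℤ) + 1 + 1 := by push_cast; ring
          rw [this]; exact hD'
        obtain ⟨E₂, x, p, φ₂, hT₂, c1, c2, hφ₂⟩ := attach hT f (REq.of_tri hT' hD'')
        refine ⟨E₂, x, φ₂, ?_, c1, hφ₂⟩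
        exact bigClosure.ext x p _ hT₂
          (bigClosure_mono (unionIcc_mono G (by push_cast; omega) le_rfl) hE)
          (bigClosure_mono (unionIcc_mono G (by push_cast; omega) (by omega)) hE'))
    refine ⟨fun i j hij F hF => ?_, h2⟩
    have := h1 i j hij F hF
    have e : -A - ((j - i - 1).toNat : ℤ) - i = -A - j + 1 := by omega
    simpa only [e] using this
  · obtain ⟨h1, h2⟩ := main
      (fun i n => gBarIntPow C G (-A - (n : ℤ) - i) (A - i) (((n : ℤ) + 1) * A)) (by
      intro i F hF
      apply iterate_steps
        (fun n => gBarIntPow C G (-A - (n : ℤ) - i) (A - i) (((n : ℤ) + 1) * A))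
        (fun n => Rm (i + (n : ℤ) + 1)) F
      · obtain ⟨E, D, f, g, h, hT, hE, hD⟩ := happ i F hF
        refine ⟨E, f, by simpa using hE, REq.of_tri hT (by simpa using hD)⟩
      · intro n E φ hE hφ
        have hk : ((((n + 1 : ℕ) : ℤ) + 1) * A).toNat = A.toNat + (((n : ℤ) + 1) * A).toNat := by
          rw [← Int.toNat_add hA.le (by positivity)]
          congr 1
          push_cast; ring
        have hi : i + ((n + 1 : ℕ) : ℤ) + 1 = i + (n : ℤ) + 1 + 1 := by push_cast; ring
        simp only [gBarIntPow]
        rw [hk, hi]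
        refine smd_comp (hR.orth (i + (n : ℤ) + 1)) A.toNat ?_ _ E F φ ?_ hφ
        · intro D hD
          obtain ⟨E', D', f, g, h', hT', hE', hD'⟩ := happ _ D hD
          refine ⟨E', f, ?_, REq.of_tri hT' hD'⟩
          exact smd_mono (coprodPowBig_mono
            (unionIcc_mono G (by push_cast; omega) (by omega)) _) hE'
        · exact smd_mono (coprodPowBig_mono
            (unionIcc_mono G (by push_cast; omega) le_rfl) _) hE)
    refine ⟨fun i j hij F hF => ?_, h2⟩
    have := h1 i j hij F hF
    have e : -A - ((j - i - 1).toNat : ℤ) - i = -A - j + 1 := by omega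
    have e2 : ((j - i - 1).toNat : ℤ) + 1 = j - i := by omega
    simpa only [e, e2] using this

end GApprox
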